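/- Let M₀ ∈ ℝ, σ > 0 and λ > 0 with λ ≥ √(2/π)·σ. Then the Cauchy PDF f_C(x; M₀, λ) and the Gaussian PDF f_G(x; M₀, σ) have exactly one intersection on (−∞, M₀): there exists a unique x < M₀ such that f_C(x; M₀, λ) = f_G(x; M₀, σ). -/

import Mathlib

/-- Gaussian PDF with location `μ` and scale `σ`. -/
noncomputable def gaussPDF (μ σ x : ℝ) : ℝ :=
  (1 / (σ * Real.sqrt (2 * Real.pi))) * Real.exp (-(x - μ) ^ 2 / (2 * σ ^ 2))

/-- Cauchy PDF with location `m` and scale `lam`. -/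
noncomputable def cauchyPDF (m lam x : ℝ) : ℝ :=
  1 / (lam * Real.pi * (1 + ((x - m) / lam) ^ 2))

/-!
Dividing the two densities and substituting `u = (x - m) ^ 2 / (2 * σ ^ 2)`, which maps `(-∞, m)`
bijectively onto `(0, ∞)`, turns the intersection equation into `exp u = κ * (1 + (2σ²/λ²) * u)`,
where `κ = λ / (√(2/π) * σ)` is the height of the Gaussian peak divided by that of the Cauchy peak.
The assumption on `λ` says `κ ≥ 1`, so at `u = 0` the strictly convex left side is at most the
affine right side. If `κ > 1` the line starts above the exponential; if `κ = 1` its slope is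
`2σ²/λ² = π > 1`, so it rises above the exponential at once. In both cases strict convexity and
the growth of `exp` leave exactly one positive crossing.
-/

open Filter Real Set

lemma subsingleton_setOf_lt_and_eq_of_strictConvexOn {𝕜 β : Type*} [Field 𝕜] [LinearOrder 𝕜]
    [IsStrictOrderedRing 𝕜] [AddCommMonoid β] [LinearOrder β] [IsOrderedAddMonoid β]
    [Module 𝕜 β] [PosSMulStrictMono 𝕜 β] {s : Set 𝕜} {f : 𝕜 → β} {a : 𝕜} {c : β}
    (hf : StrictConvexOn 𝕜 s f) (ha : a ∈ s) (hac : f a ≤ c) :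
    {x ∈ s | a < x ∧ f x = c}.Subsingleton := by
  have below {x y : 𝕜} (hax : a < x) (hxy : x < y) (hy : y ∈ s) (hyc : f y = c) : f x < c := by
    have hx : x ∈ openSegment 𝕜 a y := by
      rw [openSegment_eq_Ioo (hax.trans hxy)]
      exact ⟨hax, hxy⟩
    exact (hf.lt_on_openSegment ha hy (hax.trans hxy).ne hx).trans_le (max_le hac hyc.le)
  rintro x ⟨hx, hax, hxc⟩ y ⟨hy, hay, hyc⟩
  rcases lt_trichotomy x y with hxy | hxy | hyx
  · exact absurd hxc (below hax hxy hy hyc).ne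
  · exact hxy
  · exact absurd hyc (below hay hyx hx hxc).ne

lemma existsUnique_lt_and_eq_of_strictConvexOn_Ici {f : ℝ → ℝ} {a c : ℝ}
    (hf : StrictConvexOn ℝ (Ici a) f) (hcont : ContinuousOn f (Ici a)) (hac : f a ≤ c)
    (hlt : ∃ p ∈ Ici a, f p < c) (htop : Tendsto f atTop atTop) :
    ∃! x, a < x ∧ f x = c := by
  obtain ⟨p, hap, hpc⟩ := hlt
  obtain ⟨x, hpx, hxc⟩ :=
    intermediate_value_Ici (hcont.mono (Ici_subset_Ici.2 hap)) htop (mem_Ici.2 hpc.le)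
  have hpx' : p < x := lt_of_le_of_ne hpx fun h => hpc.ne (h ▸ hxc)
  have hax : a < x := lt_of_le_of_lt hap hpx'
  exact ⟨x, ⟨hax, hxc⟩, fun y ⟨hay, hyc⟩ =>
    subsingleton_setOf_lt_and_eq_of_strictConvexOn hf self_mem_Ici hac
      ⟨hay.le, hay, hyc⟩ ⟨hax.le, hax, hxc⟩⟩

lemma strictConvexOn_exp_sub_mul (b : ℝ) : StrictConvexOn ℝ univ fun u => exp u - b * u :=
  strictConvexOn_exp.sub_concaveOn ((LinearMap.mulLeft ℝ b).concaveOn convex_univ)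

lemma tendsto_exp_sub_mul_atTop (b : ℝ) : Tendsto (fun u => exp u - b * u) atTop atTop := by
  have hquot : Tendsto (fun u => exp u / u - b) atTop atTop := by
    simpa only [one_mul, add_zero, pow_one, sub_eq_add_neg] using
      tendsto_atTop_add_const_right atTop (-b) (tendsto_mul_exp_add_div_pow_atTop 1 0 1 one_pos)
  refine (tendsto_id.atTop_mul_atTop₀ hquot).congr' ?_
  filter_upwards [eventually_ne_atTop 0] with u hu
  simp only [id_eq]
  field_simp

lemma sub_one_lt_mul_log {b : ℝ} (hb : 0 < b) (hb1 : b ≠ 1) : b - 1 < b * log b := by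
  have hlog : log b⁻¹ < b⁻¹ - 1 := log_lt_sub_one_of_pos (inv_pos.2 hb) (inv_ne_one.2 hb1)
  rw [log_inv] at hlog
  have hmul := mul_lt_mul_of_pos_left hlog hb
  rw [mul_sub, mul_inv_cancel₀ hb.ne'] at hmul
  linarith

lemma existsUnique_pos_and_exp_eq_add_mul {b c : ℝ} (hc : 1 ≤ c) (hbc : 1 < c ∨ 1 < b) :
    ∃! u : ℝ, 0 < u ∧ exp u = c + b * u := by
  have hlt : ∃ p ∈ Ici (0 : ℝ), exp p - b * p < c := by
    rcases hbc with hc1 | hb1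
    · exact ⟨0, self_mem_Ici, by simpa using hc1⟩
    · -- `log b` minimizes `exp u - b * u`.
      refine ⟨log b, log_nonneg hb1.le, ?_⟩
      rw [exp_log (one_pos.trans hb1)]
      linarith [sub_one_lt_mul_log (one_pos.trans hb1) hb1.ne']
  simpa only [sub_eq_iff_eq_add] using
    existsUnique_lt_and_eq_of_strictConvexOn_Ici
      ((strictConvexOn_exp_sub_mul b).subset (subset_univ _) (convex_Ici 0))
      (by fun_prop) (by simpa using hc) hlt (tendsto_exp_sub_mul_atTop b)

lemma existsUnique_mem_and_comp_iff_of_bijOn {α β : Type*} {f : α → β} {s : Set α} {t : Set β}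
    (hf : BijOn f s t) {p : β → Prop} :
    (∃! x, x ∈ s ∧ p (f x)) ↔ ∃! y, y ∈ t ∧ p y := by
  constructor
  · rintro ⟨x, ⟨hx, hpx⟩, huniq⟩
    refine ⟨f x, ⟨hf.mapsTo hx, hpx⟩, ?_⟩
    rintro y ⟨hy, hpy⟩
    obtain ⟨x', hx', rfl⟩ := hf.surjOn hy
    rw [huniq x' ⟨hx', hpy⟩]
  · rintro ⟨y, ⟨hy, hpy⟩, huniq⟩
    obtain ⟨x, hx, rfl⟩ := hf.surjOn hy
    exact ⟨x, ⟨hx, hpy⟩, fun x' ⟨hx', hpx'⟩ =>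
      hf.injOn hx' hx (huniq _ ⟨hf.mapsTo hx', hpx'⟩)⟩

lemma bijOn_sq_sub_div_Iio_Ioi {k : ℝ} (m : ℝ) (hk : 0 < k) :
    BijOn (fun x => (x - m) ^ 2 / k) (Iio m) (Ioi 0) := by
  refine InvOn.bijOn (f' := fun u => m - √(k * u)) ⟨fun x hx => ?_, fun u hu => ?_⟩
    (fun x hx => div_pos (sq_pos_of_neg (sub_neg.2 hx)) hk)
    (fun u hu => sub_lt_self m (sqrt_pos.2 (mul_pos hk hu)))
  · have hxm : x - m < 0 := sub_neg.2 hx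
    simp only [mul_div_cancel₀ _ hk.ne', sqrt_sq_eq_abs, abs_of_neg hxm]
    ring
  · simp only [sub_sub_cancel_left, neg_sq, sq_sqrt (mul_pos hk hu).le,
      mul_div_cancel_left₀ _ hk.ne']

lemma sqrt_two_mul_pi_eq : √(2 * π) = π * √(2 / π) := by
  rw [show 2 * π = π ^ 2 * (2 / π) by field_simp, sqrt_mul (sq_nonneg π), sqrt_sq pi_pos.le]

lemma cauchyPDF_eq_gaussPDF_iff {m σ lam : ℝ} (hσ : σ ≠ 0) (hlam : lam ≠ 0) (x : ℝ) :
    cauchyPDF m lam x = gaussPDF m σ x ↔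
      exp ((x - m) ^ 2 / (2 * σ ^ 2)) = lam / (√(2 / π) * σ) +
        lam / (√(2 / π) * σ) * (2 * σ ^ 2 / lam ^ 2) * ((x - m) ^ 2 / (2 * σ ^ 2)) := by
  have hs : √(2 / π) ≠ 0 := by positivity
  have hgauss : gaussPDF m σ x =
      1 / (σ * (π * √(2 / π)) * exp ((x - m) ^ 2 / (2 * σ ^ 2))) := by
    rw [gaussPDF, sqrt_two_mul_pi_eq, neg_div, exp_neg, one_div, one_div, ← mul_inv]
  have hline : lam / (√(2 / π) * σ) +
      lam / (√(2 / π) * σ) * (2 * σ ^ 2 / lam ^ 2) * ((x - m) ^ 2 / (2 * σ ^ 2)) =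
      lam * π * (1 + ((x - m) / lam) ^ 2) / (σ * (π * √(2 / π))) := by
    field_simp
  rw [cauchyPDF, hgauss, hline, one_div, one_div, inv_inj, eq_div_iff (by positivity),
    mul_comm (exp _), eq_comm]

/-- If `λ ≥ √(2/π)·σ`, the Cauchy PDF `f_C(·; M₀, λ)` and the Gaussian PDF
`f_G(·; M₀, σ)` intersect exactly once on `(−∞, M₀)`. -/
theorem cauchy_gauss_pdf_unique_intersection (M₀ σ lam : ℝ) (hσ : 0 < σ) (hlam : 0 < lam)
    (h : lam ≥ Real.sqrt (2 / Real.pi) * σ) :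
    ∃! x : ℝ, x < M₀ ∧ cauchyPDF M₀ lam x = gaussPDF M₀ σ x := by
  have hs : 0 < √(2 / π) := by positivity
  have hratio : 1 ≤ lam / (√(2 / π) * σ) := (one_le_div (mul_pos hs hσ)).2 h
  have hslope : 1 < lam / (√(2 / π) * σ) ∨
      1 < lam / (√(2 / π) * σ) * (2 * σ ^ 2 / lam ^ 2) := by
    rcases hratio.lt_or_eq with hlt | heq
    · exact Or.inl hlt
    · have hlam_eq : lam = √(2 / π) * σ := eq_of_div_eq_one heq.symm
      have hpi : 2 * σ ^ 2 / lam ^ 2 = π := by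
        rw [hlam_eq, mul_pow, sq_sqrt (by positivity)]
        field_simp
      rw [← heq, one_mul, hpi]
      exact Or.inr (one_lt_two.trans_le two_le_pi)
  simp only [cauchyPDF_eq_gaussPDF_iff hσ.ne' hlam.ne']
  exact (existsUnique_mem_and_comp_iff_of_bijOn
    (bijOn_sq_sub_div_Iio_Ioi M₀ (by positivity : 0 < 2 * σ ^ 2))).2
      (existsUnique_pos_and_exp_eq_add_mul hratio hslope)
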